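/- arXiv:2604.12989 — 2 statements merged into one kernel-verified Lean document; each statement's English description precedes it below -/
import Mathlib

section
/- Assume 0 < q_i(v) < 1 for every i ∈ {1,…,L} and v ∈ 𝒱. Let B ≥ 1 with B ≤ N, and let T_B be a set of exactly B prefixes such that q(u) ≥ q(w) for every u ∈ T_B and every prefix w ∉ T_B. Then T_B is a valid draft tree, and for every valid draft tree T with |T| ≤ B one has E_{Y∼Q}[α_T(Y)] ≤ E_{Y∼Q}[α_{T_B}(Y)]; that is, T_B maximizes the surrogate expected acceptance length among all valid draft trees with at most B nodes. -/
/-- Prefix mass starting at (1-based) depth `d`. -/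
noncomputable def mass {V : Type*} (q : ℕ → V → ℝ) : ℕ → List V → ℝ
  | _, [] => 1
  | d, a :: l => q d a * mass q (d + 1) l

/-- A valid draft tree: a finite set of prefixes (tuples of length between 1 and `L`)
that is prefix-closed. -/
def ValidTree {V : Type*} (L : ℕ) (T : Finset (List V)) : Prop :=
  (∀ u ∈ T, 1 ≤ u.length ∧ u.length ≤ L) ∧
  (∀ u ∈ T, 2 ≤ u.length → u.dropLast ∈ T)

/-- Acceptance length. -/
def accLen {V : Type*} [DecidableEq V] {L : ℕ} (T : Finset (List V)) (y : Fin L → V) : ℕ :=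
  ((Finset.Icc 1 L).filter (fun d => (List.ofFn y).take d ∈ T)).sup id

/-!
The acceptance length of `y` in a prefix-closed tree `T` counts the prefixes of `y` lying in `T`,
and a prefix `u` occurs in a `Q`-random block with probability `q(u)`. Exchanging the two sums turns
the surrogate objective of `T` into `∑ u ∈ T, q(u)`, which is largest on the `B` heaviest prefixes.
These are prefix-closed because extending a prefix strictly decreases its mass.
-/

theorem sum_le_sum_of_forall_le_of_card_le {ι M : Type*} [AddCommMonoid M] [LinearOrder M]
    [IsOrderedCancelAddMonoid M] {f : ι → M} {s t : Finset ι}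
    (hcard : t.card ≤ s.card) (hnonneg : ∀ i ∈ s, 0 ≤ f i)
    (hle : ∀ i ∈ s, ∀ j ∈ t, j ∉ s → f j ≤ f i) : ∑ j ∈ t, f j ≤ ∑ i ∈ s, f i := by
  classical
  rw [← Finset.sum_sdiff_le_sum_sdiff]
  have hcard' : (t \ s).card ≤ (s \ t).card := Finset.card_sdiff_le_card_sdiff_iff.2 hcard
  obtain hempty | hne := (s \ t).eq_empty_or_nonempty
  · have hempty' : t \ s = ∅ := by simpa [hempty] using hcard'
    rw [hempty, hempty']
  · obtain ⟨m, hm, hmin⟩ := Finset.exists_min_image (s \ t) f hne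
    have hms : m ∈ s := (Finset.mem_sdiff.1 hm).1
    calc ∑ j ∈ t \ s, f j
        ≤ (t \ s).card • f m := Finset.sum_le_card_nsmul _ _ _ fun j hj =>
          hle m hms j (Finset.mem_sdiff.1 hj).1 (Finset.mem_sdiff.1 hj).2
      _ ≤ (s \ t).card • f m := nsmul_le_nsmul_left (hnonneg m hms) hcard'
      _ ≤ ∑ i ∈ s \ t, f i := Finset.card_nsmul_le_sum _ _ _ hmin

theorem sum_ofFn_succ {V M : Type*} [Fintype V] [AddCommMonoid M] (n : ℕ) (f : List V → M) :
    ∑ y : Fin (n + 1) → V, f (List.ofFn y) = ∑ v, ∑ y : Fin n → V, f (v :: List.ofFn y) := by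
  rw [← (Fin.consEquiv fun _ : Fin (n + 1) => V).sum_comp, Fintype.sum_prod_type]
  simp [Fin.consEquiv, List.ofFn_succ]

theorem sup_id_eq_card_of_Icc_one_subset {s : Finset ℕ} (hzero : 0 ∉ s)
    (hIcc : ∀ m ∈ s, Finset.Icc 1 m ⊆ s) : s.sup id = s.card := by
  have hs : s ⊆ Finset.Icc 1 (s.sup id) := fun m hm =>
    Finset.mem_Icc.2 ⟨Nat.one_le_iff_ne_zero.2 (ne_of_mem_of_not_mem hm hzero),
      Finset.le_sup (f := id) hm⟩
  apply le_antisymm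
  · exact Finset.sup_le fun m hm => by simpa using Finset.card_le_card (hIcc m hm)
  · simpa using Finset.card_le_card hs

section Mass

variable {V : Type*} (q : ℕ → V → ℝ)

theorem mass_append_singleton (d : ℕ) (l : List V) (a : V) :
    mass q d (l ++ [a]) = mass q d l * q (d + l.length) a := by
  induction l generalizing d with
  | nil => simp [mass]
  | cons b l ih => simp [mass, ih, mul_assoc, add_assoc, add_comm 1]

variable {q}

theorem mass_pos {d : ℕ} {l : List V}
    (hpos : ∀ i ∈ Finset.Ico d (d + l.length), ∀ v, 0 < q i v) : 0 < mass q d l := by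
  induction l using List.reverseRecOn with
  | nil => simp [mass]
  | append_singleton l a ih =>
    rw [mass_append_singleton]
    simp only [List.length_append, List.length_singleton, Finset.mem_Ico] at hpos ih
    exact mul_pos (ih fun i hi => hpos i (by lia)) (hpos _ (by lia) a)

theorem mass_append_singleton_lt {d : ℕ} {l : List V} {a : V} (hl : 0 < mass q d l)
    (ha : q (d + l.length) a < 1) : mass q d (l ++ [a]) < mass q d l := by
  rw [mass_append_singleton]
  exact mul_lt_of_lt_one_right hl ha

variable [Fintype V]

theorem sum_mass_ofFn_eq_one {d n : ℕ} (hq : ∀ i ∈ Finset.Ico d (d + n), ∑ v, q i v = 1) :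
    ∑ y : Fin n → V, mass q d (List.ofFn y) = 1 := by
  induction n generalizing d with
  | zero => simp [mass]
  | succ n ih =>
    simp only [Finset.mem_Ico] at hq ih
    simp only [sum_ofFn_succ, mass, ← Finset.mul_sum]
    rw [ih fun i hi => hq i (by lia)]
    simpa only [mul_one] using hq d (by lia)

theorem sum_mass_ofFn_filter_prefix [DecidableEq V] {d n : ℕ}
    (hq : ∀ i ∈ Finset.Ico d (d + n), ∑ v, q i v = 1) {u : List V} (hu : u.length ≤ n) :
    ∑ y : Fin n → V with u <+: List.ofFn y, mass q d (List.ofFn y) = mass q d u := by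
  induction u generalizing d n with
  | nil => simpa [mass] using sum_mass_ofFn_eq_one hq
  | cons a u ih =>
    obtain ⟨n, rfl⟩ := Nat.exists_eq_add_one_of_ne_zero (Nat.ne_zero_of_lt hu)
    have hq' : ∀ i ∈ Finset.Ico (d + 1) (d + 1 + n), ∑ v, q i v = 1 := fun i hi =>
      hq i (by simp only [Finset.mem_Ico] at hi ⊢; lia)
    rw [Finset.sum_filter,
      sum_ofFn_succ n fun l => if a :: u <+: l then mass q d l else 0,
      Finset.sum_eq_single_of_mem a (Finset.mem_univ a) fun b _ hb => by simp [hb.symm]]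
    simp only [List.cons_prefix_cons, true_and, mass, ← Finset.sum_filter, ← Finset.mul_sum]
    rw [ih hq' (Nat.le_of_succ_le_succ hu)]

end Mass

namespace ValidTree

variable {V : Type*} {L : ℕ} {T : Finset (List V)}

theorem mem_of_prefix (hT : ValidTree L T) {u w : List V} (hu : u ∈ T) (hwu : w <+: u)
    (hw : w ≠ []) : w ∈ T := by
  induction u using List.reverseRecOn with
  | nil => exact absurd (List.prefix_nil.1 hwu) hw
  | append_singleton u a ih =>
    obtain rfl | hwu := List.prefix_concat_iff.1 hwu
    · exact hu
    · have hlen : 1 ≤ u.length := (List.length_pos_iff.2 hw).trans_le hwu.length_le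
      have hdrop := hT.2 _ hu (by simpa using hlen)
      exact ih (by simpa using hdrop) hwu

variable [DecidableEq V]

theorem accLen_eq_card_filter_prefix (hT : ValidTree L T) (y : Fin L → V) :
    accLen T y = Finset.card {u ∈ T | u <+: List.ofFn y} := by
  rw [accLen, sup_id_eq_card_of_Icc_one_subset (by simp)]
  · refine Finset.card_bij' (fun d _ => (List.ofFn y).take d) (fun u _ => u.length) ?_ ?_ ?_ ?_
    · simp +contextual [List.take_prefix]
    · intro u hu
      obtain ⟨hu, hprefix⟩ := Finset.mem_filter.1 hu
      exact Finset.mem_filter.2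
        ⟨Finset.mem_Icc.2 (hT.1 u hu), (List.prefix_iff_eq_take.1 hprefix) ▸ hu⟩
    · simp +contextual
    · intro u hu
      exact (List.prefix_iff_eq_take.1 (Finset.mem_filter.1 hu).2).symm
  · intro m hm d hd
    simp only [Finset.mem_filter, Finset.mem_Icc] at hm hd ⊢
    refine ⟨⟨hd.1, hd.2.trans hm.1.2⟩, hT.mem_of_prefix hm.2 (List.take_prefix_take_left hd.2) ?_⟩
    rw [← List.length_pos_iff, List.length_take, List.length_ofFn]
    lia

theorem sum_mass_mul_accLen [Fintype V] {q : ℕ → V → ℝ} (hT : ValidTree L T)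
    (hq : ∀ i ∈ Finset.Icc 1 L, ∑ v, q i v = 1) :
    ∑ y : Fin L → V, mass q 1 (List.ofFn y) * (accLen T y : ℝ) = ∑ u ∈ T, mass q 1 u := by
  have hq' : ∀ i ∈ Finset.Ico 1 (1 + L), ∑ v, q i v = 1 := by
    rwa [add_comm, Finset.Ico_add_one_right_eq_Icc]
  calc ∑ y : Fin L → V, mass q 1 (List.ofFn y) * (accLen T y : ℝ)
      = ∑ y : Fin L → V, ∑ u ∈ T, if u <+: List.ofFn y then mass q 1 (List.ofFn y) else 0 := by
        simp [hT.accLen_eq_card_filter_prefix, ← Finset.sum_filter, mul_comm]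
    _ = ∑ u ∈ T, ∑ y : Fin L → V with u <+: List.ofFn y, mass q 1 (List.ofFn y) := by
        simp only [Finset.sum_filter]
        exact Finset.sum_comm
    _ = ∑ u ∈ T, mass q 1 u :=
        Finset.sum_congr rfl fun u hu => sum_mass_ofFn_filter_prefix hq' (hT.1 u hu).2

end ValidTree

theorem validTree_of_forall_mass_le {V : Type*} {L : ℕ} {q : ℕ → V → ℝ} {T : Finset (List V)}
    (hq : ∀ i ∈ Finset.Icc 1 L, ∀ v, 0 < q i v ∧ q i v < 1)
    (hlen : ∀ u ∈ T, 1 ≤ u.length ∧ u.length ≤ L)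
    (htop : ∀ u ∈ T, ∀ w : List V, 1 ≤ w.length → w.length ≤ L → w ∉ T →
      mass q 1 w ≤ mass q 1 u) : ValidTree L T := by
  refine ⟨hlen, fun u hu hu2 => ?_⟩
  obtain rfl | ⟨w, a, rfl⟩ := u.eq_nil_or_concat'
  · simp at hu2
  have hwL := (hlen _ hu).2
  simp only [List.length_append, List.length_singleton, Finset.mem_Icc] at hu2 hwL hq
  rw [List.dropLast_concat]
  have hw_pos : 0 < mass q 1 w := mass_pos fun i hi v =>
    (hq i (by simp only [Finset.mem_Ico] at hi; lia) v).1
  have hlt : mass q 1 (w ++ [a]) < mass q 1 w := mass_append_singleton_lt hw_pos (hq _ (by lia) a).2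
  by_contra hw
  exact (htop _ hu w (by lia) (by lia) hw).not_gt hlt

/-- Proposition: the top-`B` prefixes form an optimal valid draft tree.
Assuming `0 < qᵢ(v) < 1` everywhere, if `T_B` is a set of exactly `B` prefixes
(`1 ≤ B ≤ N`, `N = ∑_{d=1}^{L} |𝒱|^d`) whose masses dominate those of all non-member
prefixes, then `T_B` is a valid draft tree and it maximizes the surrogate expected
acceptance length among all valid draft trees with at most `B` nodes. -/
theorem top_B_tree_valid_and_optimal {V : Type*} [Fintype V] [DecidableEq V] [Nonempty V]
    (L : ℕ) (hL : 1 ≤ L) (q : ℕ → V → ℝ)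
    (hq0 : ∀ i ∈ Finset.Icc 1 L, ∀ v : V, 0 < q i v ∧ q i v < 1)
    (hq1 : ∀ i ∈ Finset.Icc 1 L, ∑ v : V, q i v = 1)
    (B : ℕ) (hB : 1 ≤ B) (hBN : B ≤ ∑ d ∈ Finset.Icc 1 L, Fintype.card V ^ d)
    (T_B : Finset (List V)) (hcard : T_B.card = B)
    (hTpre : ∀ u ∈ T_B, 1 ≤ u.length ∧ u.length ≤ L)
    (hTop : ∀ u ∈ T_B, ∀ w : List V, 1 ≤ w.length → w.length ≤ L → w ∉ T_B →
      mass q 1 w ≤ mass q 1 u) :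
    ValidTree L T_B ∧
    ∀ T : Finset (List V), ValidTree L T → T.card ≤ B →
      ∑ y : Fin L → V, mass q 1 (List.ofFn y) * (accLen T y : ℝ)
        ≤ ∑ y : Fin L → V, mass q 1 (List.ofFn y) * (accLen T_B y : ℝ) := by
  have hvalid : ValidTree L T_B := validTree_of_forall_mass_le hq0 hTpre hTop
  refine ⟨hvalid, fun T hT hTB => ?_⟩
  rw [hT.sum_mass_mul_accLen hq1, hvalid.sum_mass_mul_accLen hq1]
  refine sum_le_sum_of_forall_le_of_card_le (hTB.trans_eq hcard.symm) ?_ ?_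
  · refine fun u hu => (mass_pos fun i hi v => (hq0 i ?_ v).1).le
    have hlen : u.length ≤ L := (hTpre u hu).2
    simp only [Finset.mem_Ico, Finset.mem_Icc] at hi ⊢
    lia
  · exact fun u hu w hw => hTop u hu w (hT.1 w hw).1 (hT.1 w hw).2
end

section
/- Assume 0 < q_i(v) < 1 for every i ∈ {1,…,L} and v ∈ 𝒱. Let B ≥ 1 with B < N, and set K = min(B, |𝒱|). Then there exists a valid draft tree T* with |T*| ≤ B that maximizes the surrogate expected acceptance length E_{Y∼Q}[α_T(Y)] among all valid draft trees T with |T| ≤ B, and such that every node of T* lies in S_K, i.e. every node of T* uses only the top-K tokens at each depth. -/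
/-- Membership in `S_K`: `u` is a prefix (length in `{1,…,L}`) whose token at each
(1-based) depth `j` has rank at most `K` in the enumeration `vEnum`. -/
def inSK {V : Type*} (vEnum : ℕ → ℕ → V) (L K : ℕ) (u : List V) : Prop :=
  1 ≤ u.length ∧ u.length ≤ L ∧
  ∀ j : Fin u.length, ∃ k, 1 ≤ k ∧ k ≤ K ∧ vEnum ((j : ℕ) + 1) k = u.get j

/-!
The objective of a valid tree `T` is a sum over its nodes: a block `y` is accepted up to as many
tokens as it has prefixes in `T`, so the objective is the sum over `u ∈ T` of the weight of all
blocks extending `u`. Among the sets of at most `B` prefixes that maximize this sum, take one whose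
total rank is least. It then contains every prefix that is at least as heavy as, and of smaller rank
sum than, one of its elements. Deleting the last token of a node gives such a prefix, so the set is
a tree. Replacing a token by one of smaller rank gives another, so a node whose token at some depth
has rank `k` forces `k` distinct nodes into the tree, whence `k ≤ B`.
-/

section Exchange

variable {α M N : Type*}

/-- `S` is closed, within the ground set `P`, under passing to an element that is strictly cheaper
for `c` and at least as heavy for `w`. -/
def ExchangeClosed [LE M] [LT N] (P : Finset α) (w : α → M) (c : α → N) (S : Finset α) :
    Prop :=
  ∀ u ∈ S, ∀ v ∈ P, w u ≤ w v → c v < c u → v ∈ S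

variable [AddCommMonoid M] [LinearOrder M] [IsOrderedCancelAddMonoid M]
  [AddCommMonoid N] [LinearOrder N] [IsOrderedCancelAddMonoid N]

theorem exists_max_sum_exchangeClosed (P : Finset α) (w : α → M) (c : α → N) (B : ℕ) :
    ∃ S ⊆ P, S.card ≤ B ∧ (∀ T ⊆ P, T.card ≤ B → ∑ u ∈ T, w u ≤ ∑ u ∈ S, w u) ∧
      ExchangeClosed P w c S := by
  classical
  let value (S : Finset α) : M ×ₗ Nᵒᵈ := toLex (∑ u ∈ S, w u, OrderDual.toDual (∑ u ∈ S, c u))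
  obtain ⟨S, hS, hmax⟩ :=
    (P.powerset.filter (·.card ≤ B)).exists_max_image value ⟨∅, by simp⟩
  simp only [Finset.mem_filter, Finset.mem_powerset] at hS hmax
  refine ⟨S, hS.1, hS.2, fun T hTP hTB ↦ ?_, fun u hu v hv hw hc ↦ ?_⟩
  · exact Prod.Lex.monotone_fst _ _ (hmax T ⟨hTP, hTB⟩)
  · by_contra hvS
    have hv_erase : v ∉ S.erase u := fun h ↦ hvS (Finset.mem_of_mem_erase h)
    have hsub : insert v (S.erase u) ⊆ P :=
      Finset.insert_subset hv ((S.erase_subset u).trans hS.1)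
    have hcard : (insert v (S.erase u)).card ≤ B := by
      rw [Finset.card_insert_of_notMem hv_erase, Finset.card_erase_add_one hu]
      exact hS.2
    have hlt : value S < value (insert v (S.erase u)) := by
      simp only [value, Finset.sum_insert hv_erase, ← Finset.add_sum_erase S _ hu,
        Prod.Lex.toLex_lt_toLex']
      exact ⟨by gcongr, fun _ ↦ OrderDual.toDual_lt_toDual.2 (by gcongr)⟩
    exact (hmax _ ⟨hsub, hcard⟩).not_gt hlt

end Exchange

section AcceptanceLength

variable {V : Type*} {L : ℕ} {T : Finset (List V)}

theorem ValidTree.take_mem (hT : ValidTree L T) {u : List V} (hu : u ∈ T) {d : ℕ} (hd : 1 ≤ d) :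
    u.take d ∈ T := by
  induction u using List.reverseRecOn with
  | nil => simpa using hu
  | append_singleton l a ih =>
    rcases le_or_gt d l.length with hdl | hdl
    · rw [List.take_append_of_le_length hdl]
      have hl : l ∈ T := by simpa using hT.2 _ hu (by simp; omega)
      exact ih hl
    · rwa [List.take_of_length_le (by simp; omega)]

theorem sup_id_eq_card_of_downward_closed {D : Finset ℕ} (hpos : ∀ d ∈ D, 1 ≤ d)
    (hdown : ∀ m ∈ D, ∀ d, 1 ≤ d → d ≤ m → d ∈ D) : D.sup id = D.card := by
  suffices h : D = Finset.Icc 1 (D.sup id) by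
    conv_rhs => rw [h, Nat.card_Icc, Nat.add_sub_cancel]
  refine Finset.Subset.antisymm
    (fun d hd ↦ Finset.mem_Icc.2 ⟨hpos d hd, Finset.le_sup (f := id) hd⟩) fun d hd ↦ ?_
  obtain ⟨hd1, hd_sup⟩ := Finset.mem_Icc.1 hd
  obtain ⟨m, hm, hdm⟩ := (Finset.le_sup_iff hd1).1 hd_sup
  exact hdown m hm d hd1 hdm

variable [DecidableEq V]

theorem ValidTree.accLen_eq_card_prefixes (hT : ValidTree L T) (y : Fin L → V) :
    accLen T y = (T.filter (· <+: List.ofFn y)).card := by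
  rw [accLen, sup_id_eq_card_of_downward_closed]
  · refine Finset.card_bij' (fun d _ ↦ (List.ofFn y).take d) (fun u _ ↦ u.length) ?_ ?_ ?_ ?_
    · intro d hd
      exact Finset.mem_filter.2 ⟨(Finset.mem_filter.1 hd).2, List.take_prefix _ _⟩
    · intro u hu
      obtain ⟨huT, hu⟩ := Finset.mem_filter.1 hu
      exact Finset.mem_filter.2 ⟨Finset.mem_Icc.2 (hT.1 u huT),
        (List.prefix_iff_eq_take.1 hu) ▸ huT⟩
    · intro d hd
      have hdL : d ≤ L := (Finset.mem_Icc.1 (Finset.mem_filter.1 hd).1).2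
      simpa using hdL
    · intro u hu
      exact (List.prefix_iff_eq_take.1 (Finset.mem_filter.1 hu).2).symm
  · exact fun d hd ↦ (Finset.mem_Icc.1 (Finset.mem_filter.1 hd).1).1
  · intro m hm d hd hdm
    obtain ⟨hmL, hmT⟩ := Finset.mem_filter.1 hm
    have hdT := hT.take_mem hmT hd
    rw [List.take_take, min_eq_left hdm] at hdT
    exact Finset.mem_filter.2 ⟨Finset.mem_Icc.2 ⟨hd, hdm.trans (Finset.mem_Icc.1 hmL).2⟩, hdT⟩

end AcceptanceLength

section Cylinder

variable {V : Type*} [Fintype V] [DecidableEq V] {L : ℕ}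

/-- The blocks of length `L` that extend the prefix `u`. -/
def cylinder (L : ℕ) (u : List V) : Finset (Fin L → V) := {y | u <+: List.ofFn y}

/-- The total weight of the blocks extending `u`. For a product of probability distributions
this is the prefix mass of `u`. -/
def cylinderWeight (Q : (Fin L → V) → ℝ) (u : List V) : ℝ := ∑ y ∈ cylinder L u, Q y

theorem mem_cylinder {u : List V} {y : Fin L → V} : y ∈ cylinder L u ↔ u <+: List.ofFn y := by
  simp [cylinder]

theorem apply_eq_getElem_of_mem_cylinder {u : List V} {y : Fin L → V} (hy : y ∈ cylinder L u)
    {j : Fin L} (hj : (j : ℕ) < u.length) : y j = u[(j : ℕ)] := by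
  simpa using ((mem_cylinder.1 hy).getElem hj).symm

theorem update_mem_cylinder_set {u : List V} {y : Fin L → V} (hy : y ∈ cylinder L u)
    {j : Fin L} (hj : (j : ℕ) < u.length) (b : V) :
    Function.update y j b ∈ cylinder L (u.set j b) := by
  obtain ⟨t, ht⟩ := mem_cylinder.1 hy
  have hofFn : List.ofFn (Function.update y j b) = (List.ofFn y).set j b := by
    refine List.ext_getElem (by simp) fun i _ _ ↦ ?_
    simp [List.getElem_set, Function.update_apply, Fin.ext_iff, eq_comm]
  rw [mem_cylinder, hofFn, ← ht, List.set_append_left _ _ hj]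
  exact List.prefix_append _ _

theorem sum_mul_accLen_eq_sum_cylinderWeight (Q : (Fin L → V) → ℝ) {T : Finset (List V)}
    (hT : ValidTree L T) :
    ∑ y : Fin L → V, Q y * (accLen T y : ℝ) = ∑ u ∈ T, cylinderWeight Q u := by
  simp only [cylinderWeight, cylinder, Finset.sum_filter]
  rw [Finset.sum_comm]
  refine Finset.sum_congr rfl fun y _ ↦ ?_
  rw [hT.accLen_eq_card_prefixes, ← Finset.sum_filter, Finset.sum_const, nsmul_eq_mul, mul_comm]

theorem cylinderWeight_le_of_prefix {Q : (Fin L → V) → ℝ} (hQ : ∀ y, 0 ≤ Q y) {u v : List V}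
    (huv : u <+: v) : cylinderWeight Q v ≤ cylinderWeight Q u :=
  Finset.sum_le_sum_of_subset_of_nonneg
    (fun _ hy ↦ mem_cylinder.2 (huv.trans (mem_cylinder.1 hy))) fun y _ _ ↦ hQ y

theorem cylinderWeight_le_set {Q : (Fin L → V) → ℝ} {u : List V} {j : Fin L}
    (hj : (j : ℕ) < u.length) {b : V}
    (hQ : ∀ y ∈ cylinder L u, Q y ≤ Q (Function.update y j b)) :
    cylinderWeight Q u ≤ cylinderWeight Q (u.set j b) := by
  have hj' : (j : ℕ) < (u.set j b).length := by simpa using hj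
  calc ∑ y ∈ cylinder L u, Q y
      ≤ ∑ y ∈ cylinder L u, Q (Function.update y j b) := Finset.sum_le_sum hQ
    _ = ∑ z ∈ cylinder L (u.set j b), Q z := by
      refine Finset.sum_nbij' (Function.update · j b) (Function.update · j u[(j : ℕ)])
        (fun y hy ↦ update_mem_cylinder_set hy hj b) (fun z hz ↦ ?_) (fun y hy ↦ ?_)
        (fun z hz ↦ ?_) fun _ _ ↦ rfl
      · have hmem := update_mem_cylinder_set hz hj' u[(j : ℕ)]
        rwa [List.set_set, List.set_getElem_self] at hmem
      · simp [← apply_eq_getElem_of_mem_cylinder hy hj]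
      · have hzj : z j = b := by simpa using apply_eq_getElem_of_mem_cylinder hz hj'
        simp [← hzj]

end Cylinder

section Rank

variable {V : Type*}

/-- The sum over the (1-based) depths of the ranks, given by `r`, of the tokens of a prefix. -/
def rankSum (r : ℕ → V → ℕ) (u : List V) : ℕ := (u.mapIdx fun j v ↦ r (j + 1) v).sum

theorem rankSum_dropLast_lt {r : ℕ → V → ℕ} {u : List V} (hu : u ≠ [])
    (hr : 0 < r u.length (u.getLast hu)) : rankSum r u.dropLast < rankSum r u := by
  induction u using List.reverseRecOn with
  | nil => exact absurd rfl hu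
  | append_singleton l a => simpa [rankSum] using hr

theorem rankSum_set_lt {r : ℕ → V → ℕ} {u : List V} {j : ℕ} (hj : j < u.length) {b : V}
    (hr : r (j + 1) b < r (j + 1) u[j]) : rankSum r (u.set j b) < rankSum r u := by
  have hset (a : V) : rankSum r (u.set j a) =
      ((u.mapIdx fun i v ↦ r (i + 1) v).take j).sum + r (j + 1) a +
        ((u.mapIdx fun i v ↦ r (i + 1) v).drop (j + 1)).sum := by
    simp [rankSum, List.sum_set, hj]
  have hself := hset u[j]
  rw [List.set_getElem_self] at hself
  rw [hset, hself]
  gcongr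

variable [Fintype V]

/-- The rank of the token `v` at depth `i`: its index in the enumeration `vEnum i` of `V`, which
starts at `1`. -/
noncomputable def tokenRank (vEnum : ℕ → ℕ → V) (i : ℕ) (v : V) : ℕ :=
  Function.invFunOn (vEnum i) (Set.Icc 1 (Fintype.card V)) v

variable {vEnum : ℕ → ℕ → V} {i : ℕ}

theorem tokenRank_mem_Icc
    (h : Set.BijOn (vEnum i) (Set.Icc 1 (Fintype.card V)) Set.univ) (v : V) :
    tokenRank vEnum i v ∈ Set.Icc 1 (Fintype.card V) :=
  h.surjOn.mapsTo_invFunOn (Set.mem_univ v)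

theorem vEnum_tokenRank
    (h : Set.BijOn (vEnum i) (Set.Icc 1 (Fintype.card V)) Set.univ) (v : V) :
    vEnum i (tokenRank vEnum i v) = v :=
  h.invOn_invFunOn.2 (Set.mem_univ v)

theorem tokenRank_vEnum
    (h : Set.BijOn (vEnum i) (Set.Icc 1 (Fintype.card V)) Set.univ) {k : ℕ}
    (hk : k ∈ Set.Icc 1 (Fintype.card V)) : tokenRank vEnum i (vEnum i k) = k :=
  h.invOn_invFunOn.1 hk

end Rank

theorem inSK.mono {V : Type*} {vEnum : ℕ → ℕ → V} {L K K' : ℕ} {u : List V}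
    (hu : inSK vEnum L K u) (hK : K ≤ K') : inSK vEnum L K' u :=
  ⟨hu.1, hu.2.1, fun j ↦ (hu.2.2 j).imp fun _ hk ↦ ⟨hk.1, hk.2.1.trans hK, hk.2.2⟩⟩

section ExchangeClosedTree

/-- The ground set of the exchange argument: all prefixes, of length between `1` and `L`, over the
vocabulary `V`. -/
noncomputable def prefixes (V : Type*) [Finite V] (L : ℕ) : Finset (List V) :=
  (List.finite_length_le V L).toFinset.filter (1 ≤ ·.length)

theorem mem_prefixes {V : Type*} [Finite V] {L : ℕ} {u : List V} :
    u ∈ prefixes V L ↔ 1 ≤ u.length ∧ u.length ≤ L := by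
  simp [prefixes, and_comm]

variable {V : Type*} [Fintype V] {L : ℕ} {T : Finset (List V)}

variable [DecidableEq V] {Q : (Fin L → V) → ℝ}

theorem validTree_of_exchangeClosed (hQ : ∀ y, 0 ≤ Q y) {r : ℕ → V → ℕ}
    (hr : ∀ i ∈ Finset.Icc 1 L, ∀ v, 0 < r i v) (hTP : T ⊆ prefixes V L)
    (hT : ExchangeClosed (prefixes V L) (cylinderWeight Q) (rankSum r) T) : ValidTree L T := by
  refine ⟨fun u hu ↦ mem_prefixes.1 (hTP hu), fun u hu hlen ↦ ?_⟩
  obtain ⟨hu1, huL⟩ := mem_prefixes.1 (hTP hu)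
  have hne : u ≠ [] := List.ne_nil_of_length_pos hu1
  refine hT u hu _ (mem_prefixes.2 ?_) (cylinderWeight_le_of_prefix hQ u.dropLast_prefix)
    (rankSum_dropLast_lt hne (hr _ (Finset.mem_Icc.2 ⟨hu1, huL⟩) _))
  rw [List.length_dropLast]
  omega

variable {vEnum : ℕ → ℕ → V}

theorem set_vEnum_mem_of_exchangeClosed (hTP : T ⊆ prefixes V L)
    (hT : ExchangeClosed (prefixes V L) (cylinderWeight Q) (rankSum (tokenRank vEnum)) T)
    {u : List V} (hu : u ∈ T) {j : Fin L} (hj : (j : ℕ) < u.length)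
    (hbij : Set.BijOn (vEnum (j + 1)) (Set.Icc 1 (Fintype.card V)) Set.univ)
    (hanti : ∀ y, AntitoneOn (fun k ↦ Q (Function.update y j (vEnum (j + 1) k)))
      (Set.Icc 1 (Fintype.card V)))
    {k : ℕ} (hk1 : 1 ≤ k) (hk : k ≤ tokenRank vEnum (j + 1) u[(j : ℕ)]) :
    u.set j (vEnum (j + 1) k) ∈ T := by
  have hrank := tokenRank_mem_Icc hbij u[(j : ℕ)]
  have hkV : k ∈ Set.Icc 1 (Fintype.card V) := ⟨hk1, hk.trans hrank.2⟩
  rcases hk.eq_or_lt with rfl | hlt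
  · simpa [vEnum_tokenRank hbij] using hu
  refine hT u hu _ ?_ (cylinderWeight_le_set hj fun y hy ↦ ?_) (rankSum_set_lt hj ?_)
  · simpa [mem_prefixes] using hTP hu
  · have hle := hanti y hkV hrank hk
    simpa [vEnum_tokenRank hbij, ← apply_eq_getElem_of_mem_cylinder hy hj] using hle
  · rwa [tokenRank_vEnum hbij hkV]

theorem tokenRank_le_card_of_exchangeClosed (hTP : T ⊆ prefixes V L)
    (hT : ExchangeClosed (prefixes V L) (cylinderWeight Q) (rankSum (tokenRank vEnum)) T)
    {u : List V} (hu : u ∈ T) {j : Fin L} (hj : (j : ℕ) < u.length)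
    (hbij : Set.BijOn (vEnum (j + 1)) (Set.Icc 1 (Fintype.card V)) Set.univ)
    (hanti : ∀ y, AntitoneOn (fun k ↦ Q (Function.update y j (vEnum (j + 1) k)))
      (Set.Icc 1 (Fintype.card V))) :
    tokenRank vEnum (j + 1) u[(j : ℕ)] ≤ T.card := by
  set k₀ := tokenRank vEnum (j + 1) u[(j : ℕ)]
  have hk₀ : k₀ ≤ Fintype.card V := (tokenRank_mem_Icc hbij _).2
  have hmaps : ∀ k ∈ Finset.Icc 1 k₀, u.set j (vEnum (j + 1) k) ∈ T := fun k hk ↦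
    set_vEnum_mem_of_exchangeClosed hTP hT hu hj hbij hanti (Finset.mem_Icc.1 hk).1
      (Finset.mem_Icc.1 hk).2
  have hinj : Set.InjOn (fun k ↦ u.set j (vEnum (j + 1) k)) (Finset.Icc 1 k₀) := by
    intro k hk k' hk' heq
    rw [Finset.coe_Icc] at hk hk'
    have hv : vEnum (j + 1) k = vEnum (j + 1) k' := by
      simpa [hj] using congrArg (·[(j : ℕ)]?) heq
    exact hbij.injOn ⟨hk.1, hk.2.trans hk₀⟩ ⟨hk'.1, hk'.2.trans hk₀⟩ hv
  simpa using Finset.card_le_card_of_injOn _ hmaps hinj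

theorem inSK_of_exchangeClosed (hTP : T ⊆ prefixes V L)
    (hT : ExchangeClosed (prefixes V L) (cylinderWeight Q) (rankSum (tokenRank vEnum)) T)
    (hbij : ∀ i ∈ Finset.Icc 1 L,
      Set.BijOn (vEnum i) (Set.Icc 1 (Fintype.card V)) Set.univ)
    (hanti : ∀ y (j : Fin L), AntitoneOn (fun k ↦ Q (Function.update y j (vEnum (j + 1) k)))
      (Set.Icc 1 (Fintype.card V)))
    {u : List V} (hu : u ∈ T) : inSK vEnum L (min T.card (Fintype.card V)) u := by
  obtain ⟨hu1, huL⟩ := mem_prefixes.1 (hTP hu)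
  refine ⟨hu1, huL, fun j ↦ ?_⟩
  let jL : Fin L := j.castLE huL
  have hbij_j := hbij (j + 1) (Finset.mem_Icc.2 ⟨by omega, by omega⟩)
  obtain ⟨hrank1, hrankV⟩ := tokenRank_mem_Icc hbij_j (u.get j)
  have hrankT : tokenRank vEnum (j + 1) (u.get j) ≤ T.card :=
    tokenRank_le_card_of_exchangeClosed (j := jL) hTP hT hu j.2 hbij_j (hanti · jL)
  exact ⟨_, hrank1, le_min hrankT hrankV, vEnum_tokenRank hbij_j _⟩

end ExchangeClosedTree

section Mass

variable {V : Type*}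

theorem mass_ofFn (q : ℕ → V → ℝ) (d : ℕ) {n : ℕ} (y : Fin n → V) :
    mass q d (List.ofFn y) = ∏ i : Fin n, q (d + i) (y i) := by
  induction n generalizing d with
  | zero => simp [mass]
  | succ n ih => simp [List.ofFn_succ, mass, ih, Fin.prod_univ_succ, add_assoc, add_comm 1]

variable {L : ℕ} {q : ℕ → V → ℝ}

theorem mass_ofFn_nonneg (hq : ∀ i ∈ Finset.Icc 1 L, ∀ v, 0 ≤ q i v) (y : Fin L → V) :
    0 ≤ mass q 1 (List.ofFn y) := by
  rw [mass_ofFn]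
  exact Finset.prod_nonneg fun i _ ↦ hq _ (Finset.mem_Icc.2 ⟨by omega, by omega⟩) _

theorem mass_ofFn_update_le (hq : ∀ i ∈ Finset.Icc 1 L, ∀ v, 0 ≤ q i v) (y : Fin L → V)
    (j : Fin L) {a b : V} (hab : q (j + 1) a ≤ q (j + 1) b) :
    mass q 1 (List.ofFn (Function.update y j a)) ≤
      mass q 1 (List.ofFn (Function.update y j b)) := by
  rw [mass_ofFn, mass_ofFn]
  refine Finset.prod_le_prod (fun i _ ↦ hq _ (Finset.mem_Icc.2 ⟨by omega, by omega⟩) _)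
    fun i _ ↦ ?_
  rcases eq_or_ne i j with rfl | hij
  · simpa [add_comm 1] using hab
  · simp [hij]

end Mass

theorem exists_optimal_tree_in_top_K_general {V : Type*} [Fintype V] [DecidableEq V]
    {L : ℕ} {Q : (Fin L → V) → ℝ} (hQ : ∀ y, 0 ≤ Q y)
    {vEnum : ℕ → ℕ → V}
    (hbij : ∀ i ∈ Finset.Icc 1 L, Set.BijOn (vEnum i) (Set.Icc 1 (Fintype.card V)) Set.univ)
    (hanti : ∀ y (j : Fin L), AntitoneOn (fun k ↦ Q (Function.update y j (vEnum (j + 1) k)))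
      (Set.Icc 1 (Fintype.card V)))
    (B : ℕ) :
    ∃ Tstar : Finset (List V), ValidTree L Tstar ∧ Tstar.card ≤ B ∧
      (∀ u ∈ Tstar, inSK vEnum L (min B (Fintype.card V)) u) ∧
      ∀ T : Finset (List V), ValidTree L T → T.card ≤ B →
        ∑ y : Fin L → V, Q y * (accLen T y : ℝ) ≤ ∑ y : Fin L → V, Q y * (accLen Tstar y : ℝ) := by
  obtain ⟨S, hSP, hSB, hmax, hexch⟩ :=
    exists_max_sum_exchangeClosed (prefixes V L) (cylinderWeight Q) (rankSum (tokenRank vEnum)) B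
  have hS : ValidTree L S :=
    validTree_of_exchangeClosed hQ (fun i hi v ↦ (tokenRank_mem_Icc (hbij i hi) v).1) hSP hexch
  refine ⟨S, hS, hSB, fun u hu ↦ ?_, fun T hT hTB ↦ ?_⟩
  · exact (inSK_of_exchangeClosed hSP hexch hbij hanti hu).mono (min_le_min_right _ hSB)
  · rw [sum_mul_accLen_eq_sum_cylinderWeight Q hT, sum_mul_accLen_eq_sum_cylinderWeight Q hS]
    exact hmax T (fun u hu ↦ mem_prefixes.2 (hT.1 u hu)) hTB

/-- Lemma: top-`K` reduction.
Assuming `0 < qᵢ(v) < 1` everywhere, for `1 ≤ B < N` and `K = min(B, |𝒱|)`, there exists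
a valid draft tree `T*` with at most `B` nodes that maximizes the surrogate expected
acceptance length among all valid draft trees with at most `B` nodes, and whose nodes all
use only the top-`K` tokens at each depth. Here `vEnum i k` is the rank-`k` token at
depth `i` in a fixed nonincreasing-probability enumeration of `𝒱`. -/
theorem exists_optimal_tree_in_top_K {V : Type*} [Fintype V] [DecidableEq V] [Nonempty V]
    (L : ℕ) (hL : 1 ≤ L) (q : ℕ → V → ℝ)
    (hq0 : ∀ i ∈ Finset.Icc 1 L, ∀ v : V, 0 < q i v ∧ q i v < 1)
    (hq1 : ∀ i ∈ Finset.Icc 1 L, ∑ v : V, q i v = 1)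
    (vEnum : ℕ → ℕ → V)
    (hbij : ∀ i ∈ Finset.Icc 1 L, Set.BijOn (vEnum i) (Set.Icc 1 (Fintype.card V)) Set.univ)
    (hmono : ∀ i ∈ Finset.Icc 1 L, ∀ k k' : ℕ, 1 ≤ k → k ≤ k' → k' ≤ Fintype.card V →
      q i (vEnum i k') ≤ q i (vEnum i k))
    (B : ℕ) (hB : 1 ≤ B) (hBN : B < ∑ d ∈ Finset.Icc 1 L, Fintype.card V ^ d) :
    ∃ Tstar : Finset (List V), ValidTree L Tstar ∧ Tstar.card ≤ B ∧
      (∀ u ∈ Tstar, inSK vEnum L (min B (Fintype.card V)) u) ∧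
      ∀ T : Finset (List V), ValidTree L T → T.card ≤ B →
        ∑ y : Fin L → V, mass q 1 (List.ofFn y) * (accLen T y : ℝ)
          ≤ ∑ y : Fin L → V, mass q 1 (List.ofFn y) * (accLen Tstar y : ℝ) :=
  exists_optimal_tree_in_top_K_general (mass_ofFn_nonneg fun i hi v ↦ (hq0 i hi v).1.le) hbij
    (fun y j _ hk _ hk' hle ↦ mass_ofFn_update_le (fun i hi v ↦ (hq0 i hi v).1.le) y j
      (hmono _ (Finset.mem_Icc.2 ⟨by omega, by omega⟩) _ _ hk.1 hle hk'.2)) B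
end
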